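/- For every real A > 0 there exist constants C₁, C₂, N₀ > 0 such that for all real N ≥ N₀ and all integers r with 1 ≤ r ≤ A·log log N: C₁·(N/log N)·((1/2)·log log N)^{r−1}/(r−1)! ≤ |𝒟_r(N)| ≤ C₂·(N/log N)·((1/2)·log log N)^{r−1}/(r−1)!. -/

import Mathlib

/-- `𝒟`: squarefree positive integers all of whose prime divisors are `≡ 1, 2 (mod 4)`. -/
def PellD : Set ℕ :=
  {d | Squarefree d ∧ 0 < d ∧ ∀ p : ℕ, p.Prime → p ∣ d → p % 4 = 1 ∨ p % 4 = 2}

/-- `𝒟_r(N)`: elements of `𝒟` below `N` with exactly `r` distinct prime factors. -/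
def PellDr (r : ℕ) (N : ℝ) : Set ℕ :=
  {d ∈ PellD | (d : ℝ) < N ∧ d.primeFactors.card = r}



namespace PellAux
open Finset

lemma abel_bound (f b : ℕ → ℝ) (m : ℕ) (B : ℝ) (hf : ∀ k, m ≤ k → f (k+1) ≤ f k)
    (hf0 : ∀ k, m ≤ k → 0 ≤ f k)
    (hb : ∀ n, m ≤ n → |∑ k ∈ Ico m n, b k| ≤ B) (n : ℕ) (hn : m ≤ n) :
    |∑ k ∈ Ico m n, f k * b k| ≤ B * f m := by
  have key : ∀ n, m ≤ n → ∑ k ∈ Ico m n, f k * b k = f n * (∑ k ∈ Ico m n, b k) +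
      ∑ k ∈ Ico m n, (f k - f (k+1)) * ∑ j ∈ Ico m (k+1), b j := by
    intro n hn
    induction n, hn using Nat.le_induction with
    | base => simp
    | succ n hn ih =>
      rw [sum_Ico_succ_top hn, sum_Ico_succ_top hn (fun k => (f k - f (k+1)) * _), ih,
        sum_Ico_succ_top hn b]
      ring
  have tele : ∀ n, m ≤ n → ∑ k ∈ Ico m n, (f k - f (k+1)) = f m - f n := by
    intro n hn
    induction n, hn using Nat.le_induction with
    | base => simp
    | succ n hn ih => rw [sum_Ico_succ_top hn, ih]; ring
  rw [key n hn]
  calc _ ≤ |f n * (∑ k ∈ Ico m n, b k)| + |∑ k ∈ Ico m n, (f k - f (k+1)) * ∑ j ∈ Ico m (k+1), b j| :=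
        abs_add_le _ _
    _ ≤ f n * B + ∑ k ∈ Ico m n, (f k - f (k+1)) * B := by
        apply add_le_add
        · rw [abs_mul, abs_of_nonneg (hf0 n hn)]
          exact mul_le_mul_of_nonneg_left (hb n hn) (hf0 n hn)
        · refine (abs_sum_le_sum_abs _ _).trans (sum_le_sum fun k hk => ?_)
          have hk' := (mem_Ico.1 hk).1
          rw [abs_mul, abs_of_nonneg (sub_nonneg.2 (hf k hk'))]
          exact mul_le_mul_of_nonneg_left (hb _ (by omega)) (sub_nonneg.2 (hf k hk'))
    _ = B * f m := by rw [← sum_mul, tele n hn]; ring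

noncomputable def chi (n : ℕ) : ℝ := ((ZMod.χ₄ (n : ZMod 4) : ℤ) : ℝ)

lemma chi_mul (a b : ℕ) : chi (a * b) = chi a * chi b := by
  unfold chi; push_cast; rw [map_mul]; push_cast; ring

lemma chi_eq (n : ℕ) : chi n = if n % 4 = 1 then 1 else if n % 4 = 3 then -1 else 0 := by
  unfold chi
  rw [ZMod.χ₄_nat_eq_if_mod_four]
  have : n % 4 < 4 := Nat.mod_lt _ (by norm_num)
  split_ifs <;> first | omega | simp

lemma abs_chi_le (n : ℕ) : |chi n| ≤ 1 := by
  rw [chi_eq]; split_ifs <;> simp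

lemma sum_chi_range (n : ℕ) : ∑ k ∈ range n, chi k = if n % 4 = 2 ∨ n % 4 = 3 then 1 else 0 := by
  induction n with
  | zero => simp
  | succ n ih =>
    rw [sum_range_succ, ih, chi_eq]
    have : n % 4 < 4 := Nat.mod_lt _ (by norm_num)
    split_ifs <;> first | omega | norm_num

lemma sum_chi_Ico (m n : ℕ) (h : m ≤ n) : |∑ k ∈ Ico m n, chi k| ≤ 1 := by
  rw [sum_Ico_eq_sub _ h, sum_chi_range, sum_chi_range]
  split_ifs <;> norm_num

noncomputable def L (n : ℕ) : ℝ := ∑ m ∈ Ioc 0 n, chi m / m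

lemma L_sub (k n : ℕ) (h : k ≤ n) : |L n - L k| ≤ 1 / ((k : ℝ) + 1) := by
  have h1 : L n - L k = ∑ m ∈ Ico (k+1) (n+1), (1 / (m : ℝ)) * chi m := by
    unfold L
    rw [← Ioc_union_Ioc_eq_Ioc (Nat.zero_le k) h, sum_union (Ioc_disjoint_Ioc_of_le le_rfl)]
    have : Ioc k n = Ico (k+1) (n+1) := by ext x; simp only [mem_Ioc, mem_Ico]; omega
    rw [this]
    simp [div_eq_inv_mul]
  rw [h1]
  refine (abel_bound (fun m => 1 / (m : ℝ)) chi (k+1) 1 ?_ ?_ ?_ (n+1) (by omega)).trans ?_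
  · intro j hj
    have : (0 : ℝ) < j := by exact_mod_cast (by omega : 0 < j)
    push_cast
    exact one_div_le_one_div_of_le this (by linarith)
  · intro j _; positivity
  · intro j hj; exact sum_chi_Ico _ _ hj
  · push_cast; simp

lemma L_ge (n : ℕ) (h : 1 ≤ n) : 2 / 3 ≤ L n := by
  have L1 : L 1 = 1 := by simp [L, chi_eq]
  have L2 : L 2 = 1 := by
    have : Ioc 0 2 = ({1, 2} : Finset ℕ) := by decide
    simp [L, this, chi_eq]
  rcases Nat.lt_or_ge n 2 with h2 | h2
  · have : n = 1 := by omega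
    rw [this, L1]; norm_num
  · have := L_sub 2 n h2
    rw [L2, abs_le] at this
    norm_num at this
    linarith [this.1]

lemma chi_log_bound (n : ℕ) : |∑ m ∈ Ioc 0 n, chi m * Real.log m / m| ≤ 1 := by
  rcases Nat.lt_or_ge n 3 with h2 | h2
  · interval_cases n
    · simp
    · simp
    · have : Ioc 0 2 = ({1, 2} : Finset ℕ) := by decide
      simp [this, chi_eq]
  · have h1 : ∑ m ∈ Ioc 0 n, chi m * Real.log m / m =
        ∑ m ∈ Ico 3 (n+1), (Real.log m / (m : ℝ)) * chi m := by
      rw [← Ioc_union_Ioc_eq_Ioc (Nat.zero_le 2) (by omega : 2 ≤ n),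
        sum_union (Ioc_disjoint_Ioc_of_le le_rfl)]
      have : Ioc 2 n = Ico (3) (n+1) := by ext x; simp only [mem_Ioc, mem_Ico]; omega
      rw [this]
      have : Ioc 0 2 = ({1, 2} : Finset ℕ) := by decide
      rw [this]
      simp [chi_eq 2]
      exact sum_congr rfl fun _ _ => by ring
    have he : Real.exp 1 ≤ 3 := by linarith [Real.exp_one_lt_d9]
    rw [h1]
    refine (abel_bound (fun m => Real.log m / (m : ℝ)) chi 3 1 ?_ ?_ ?_ (n+1) (by omega)).trans ?_
    · intro j hj
      have h3 : (3 : ℝ) ≤ j := by exact_mod_cast hj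
      apply Real.log_div_self_antitoneOn
      · exact he.trans h3
      · simp; linarith
      · simp
    · intro j hj
      exact div_nonneg (Real.log_natCast_nonneg _) (by positivity)
    · intro j hj; exact sum_chi_Ico _ _ hj
    · have := Real.log_le_sub_one_of_pos (show (0:ℝ) < 3 by norm_num)
      push_cast
      rw [one_mul, div_le_one (by norm_num)]
      linarith

open ArithmeticFunction in
lemma chi_vM_identity (N : ℕ) : ∑ m ∈ Ioc 0 N, chi m * Real.log m / m =
    ∑ d ∈ Ioc 0 N, (chi d * vonMangoldt d / d) * L (N / d) := by
  let F : ArithmeticFunction ℝ := ⟨fun n => chi n * vonMangoldt n / n, by simp⟩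
  let G : ArithmeticFunction ℝ := ⟨fun n => chi n / n, by simp⟩
  have h := sum_Ioc_mul_eq_sum_sum F G N
  have h2 : ∀ n ∈ Ioc 0 N, (F * G) n = chi n * Real.log n / n := by
    intro n hn
    rw [mul_apply]
    have h3 : ∀ x ∈ n.divisorsAntidiagonal, F x.1 * G x.2 = chi n / n * vonMangoldt x.1 := by
      intro x hx
      have := (Nat.mem_divisorsAntidiagonal.1 hx).1
      simp only [F, G, coe_mk]
      rw [← this, chi_mul]; push_cast
      rw [div_mul_div_comm]; ring
    rw [sum_congr rfl h3, ← mul_sum, Nat.sum_divisorsAntidiagonal (fun i _ => vonMangoldt i),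
      vonMangoldt_sum]; ring
  rw [sum_congr rfl h2] at h
  rw [h]; rfl

open ArithmeticFunction in
lemma chi_vM_bound (N : ℕ) : |∑ d ∈ Ioc 0 N, chi d * vonMangoldt d / d| ≤ 3/2 * (Real.log 4 + 5) := by
  rcases Nat.eq_zero_or_pos N with rfl | hN
  · have : 0 < Real.log 4 := Real.log_pos (by norm_num)
    simp; linarith
  have hNr : (0:ℝ) < N := by exact_mod_cast hN
  set T := ∑ d ∈ Ioc 0 N, chi d * vonMangoldt d / d with hT
  have h1 : L N * T = ∑ d ∈ Ioc 0 N, (chi d * vonMangoldt d / d) * (L N - L (N / d)) +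
      ∑ m ∈ Ioc 0 N, chi m * Real.log m / m := by
    rw [chi_vM_identity, ← sum_add_distrib, hT, mul_sum]
    exact sum_congr rfl fun _ _ => by ring
  have h2 : |∑ d ∈ Ioc 0 N, (chi d * vonMangoldt d / d) * (L N - L (N / d))| ≤ Real.log 4 + 4 := by
    have hpsi := Chebyshev.psi_le_const_mul_self hNr.le
    rw [Chebyshev.psi, Nat.floor_natCast] at hpsi
    calc _ ≤ ∑ d ∈ Ioc 0 N, vonMangoldt d / N := by
          refine (abs_sum_le_sum_abs _ _).trans (sum_le_sum fun d hd => ?_)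
          obtain ⟨hd0, hdN⟩ := mem_Ioc.1 hd
          have hdr : (0:ℝ) < d := by exact_mod_cast hd0
          have hL := L_sub (N/d) N (Nat.div_le_self _ _)
          have hlt : (N:ℝ) ≤ d * ((N/d : ℕ) + 1) := by
            have := Nat.lt_mul_div_succ N hd0
            exact_mod_cast this.le
          have hL2 : |L N - L (N/d)| ≤ d / N := by
            refine hL.trans ?_
            rw [div_le_div_iff₀ (by positivity) hNr]; linarith
          rw [abs_mul, abs_div, abs_mul, abs_of_nonneg (vonMangoldt_nonneg (n := d)), abs_of_pos hdr]
          have h5 : |chi d| * vonMangoldt d / d ≤ vonMangoldt d / d := by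
            apply div_le_div_of_nonneg_right _ hdr.le
            exact mul_le_of_le_one_left vonMangoldt_nonneg (abs_chi_le d)
          calc _ ≤ vonMangoldt d / d * (d / N) :=
                mul_le_mul h5 hL2 (abs_nonneg _) (div_nonneg vonMangoldt_nonneg hdr.le)
            _ = _ := by field_simp
      _ ≤ _ := by
        rw [← sum_div, div_le_iff₀ hNr]; exact hpsi
  have h3 := chi_log_bound N
  have h4 : |L N * T| ≤ Real.log 4 + 5 := by
    rw [h1]; refine (abs_add_le _ _).trans ?_; linarith
  have h5 := L_ge N hN
  rw [abs_mul, abs_of_pos (by linarith)] at h4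
  nlinarith [abs_nonneg T]

open ArithmeticFunction in
lemma vM_bound (N : ℕ) (hN : 1 ≤ N) :
    |∑ d ∈ Ioc 0 N, vonMangoldt d / d - Real.log N| ≤ Real.log 4 + 4 := by
  have hNr : (0:ℝ) < N := by exact_mod_cast hN
  have h4 : 0 < Real.log 4 := Real.log_pos (by norm_num)
  have hpsi := Chebyshev.psi_le_const_mul_self hNr.le
  rw [Chebyshev.psi, Nat.floor_natCast] at hpsi
  have h := sum_Ioc_mul_zeta_eq_sum vonMangoldt N
  rw [vonMangoldt_mul_zeta] at h
  have hfac : ∑ n ∈ Ioc 0 N, ArithmeticFunction.log n = Real.log (N.factorial) := by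
    clear h hpsi hNr hN
    induction N with
    | zero => simp
    | succ n ih =>
      rw [← Order.succ_eq_add_one, ← Finset.insert_Ioc_right_eq_Ioc_succ (by simp), sum_insert (by simp), ih,
        Order.succ_eq_add_one, Nat.factorial_succ, log_apply]
      push_cast
      rw [Real.log_mul (by positivity) (by positivity)]
  rw [hfac] at h
  have up : Real.log N.factorial ≤ N * Real.log N := by
    rw [← Real.log_pow]
    exact Real.log_le_log (by positivity) (by exact_mod_cast Nat.factorial_le_pow N)
  have lo : N * Real.log N - N ≤ Real.log N.factorial := by
    have := Stirling.le_log_factorial_stirling (n := N) (by omega)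
    have h1 : 0 ≤ Real.log N := Real.log_natCast_nonneg _
    have h2 : 0 ≤ Real.log (2 * Real.pi) := Real.log_nonneg (by linarith [Real.pi_gt_three])
    linarith
  have e1 : Real.log N.factorial ≤ N * ∑ d ∈ Ioc 0 N, vonMangoldt d / d := by
    rw [h, mul_sum]
    refine sum_le_sum fun d hd => ?_
    have : ((N / d : ℕ) : ℝ) ≤ N / d := Nat.cast_div_le
    calc _ ≤ vonMangoldt d * (N / d : ℝ) := mul_le_mul_of_nonneg_left this vonMangoldt_nonneg
      _ = _ := by ring
  have e2 : N * ∑ d ∈ Ioc 0 N, vonMangoldt d / d - ∑ d ∈ Ioc 0 N, vonMangoldt d ≤ Real.log N.factorial := by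
    rw [h, mul_sum, ← sum_sub_distrib]
    refine sum_le_sum fun d hd => ?_
    obtain ⟨hd0, hdN⟩ := mem_Ioc.1 hd
    have hdr : (0:ℝ) < d := by exact_mod_cast hd0
    have hlt : (N:ℝ) ≤ d * ((N/d : ℕ) + 1) := by
      have := Nat.lt_mul_div_succ N hd0
      exact_mod_cast this.le
    have : (N / d : ℝ) - 1 ≤ ((N / d : ℕ) : ℝ) := by
      rw [sub_le_iff_le_add, div_le_iff₀ hdr]; linarith
    calc _ = vonMangoldt d * ((N / d : ℝ) - 1) := by ring
      _ ≤ _ := mul_le_mul_of_nonneg_left this vonMangoldt_nonneg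
  rw [abs_le]
  constructor
  · have : N * (Real.log N - 1) ≤ N * ∑ d ∈ Ioc 0 N, vonMangoldt d / d := by linarith
    have := le_of_mul_le_mul_left this hNr
    linarith
  · have : N * ∑ d ∈ Ioc 0 N, vonMangoldt d / d ≤ N * (Real.log N + (Real.log 4 + 4)) := by linarith
    have := le_of_mul_le_mul_left this hNr
    linarith

end PellAux



namespace PellAux
open Finset

noncomputable def aa (n : ℕ) : ℝ := if n.Prime ∧ n % 4 = 1 then Real.log n / n else 0

lemma aa_nonneg (n : ℕ) : 0 ≤ aa n := by
  unfold aa; split_ifs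
  · exact div_nonneg (Real.log_natCast_nonneg _) (by positivity)
  · exact le_rfl

open ArithmeticFunction in
lemma aa_sum : ∃ B : ℝ, 0 ≤ B ∧ ∀ N : ℕ, 1 ≤ N → |∑ n ∈ Ioc 0 N, aa n - 1/2 * Real.log N| ≤ B := by
  have hs := vonMangoldt.summable_residueClass_non_primes_div (q := 1) (0 : ZMod 1)
  set q : ℕ → ℝ := fun n => (if n.Prime then 0 else vonMangoldt.residueClass (0 : ZMod 1) n) / n with hq
  have hqn : ∀ n, q n = if n.Prime then 0 else vonMangoldt n / n := by
    intro n
    simp only [hq]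
    split_ifs
    · simp
    · rw [vonMangoldt.residueClass, Set.indicator_of_mem]
      exact Subsingleton.elim _ _
  have hq0 : ∀ n, 0 ≤ q n := by
    intro n; rw [hqn]; split_ifs
    · exact le_rfl
    · exact div_nonneg vonMangoldt_nonneg (by positivity)
  set C := ∑' n, q n with hC
  have hC0 : 0 ≤ C := tsum_nonneg hq0
  have h4 : 0 < Real.log 4 := Real.log_pos (by norm_num)
  have hl2 : 0 < Real.log 2 := Real.log_pos (by norm_num)
  let e : ℕ → ℝ := fun n => if n = 2 then Real.log 2 / 2 else 0
  have pt : ∀ n, 2 * aa n ≤ (1 + chi n) * vonMangoldt n / n ∧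
      (1 + chi n) * vonMangoldt n / n ≤ 2 * aa n + 2 * q n + e n := by
    intro n
    have hc := abs_le.1 (abs_chi_le n)
    have e0 : 0 ≤ e n := by simp only [e]; split_ifs <;> positivity
    have hv : 0 ≤ vonMangoldt n / n := div_nonneg vonMangoldt_nonneg (by positivity)
    rw [mul_div_assoc]
    by_cases hp : n.Prime
    · rw [hqn, if_pos hp]
      by_cases h1 : n % 4 = 1
      · have : chi n = 1 := by rw [chi_eq, if_pos h1]
        rw [this, aa, if_pos ⟨hp, h1⟩, vonMangoldt_apply_prime hp]
        constructor <;> linarith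
      · rw [aa, if_neg (by tauto)]
        rcases hp.eq_two_or_odd with rfl | hodd
        · rw [vonMangoldt_apply_prime hp]
          simp [chi_eq, e]; positivity
        · have : chi n = -1 := by rw [chi_eq, if_neg h1, if_pos (by omega)]
          rw [this]
          constructor <;> linarith
    · rw [aa, if_neg (by tauto), hqn, if_neg hp]
      constructor
      · nlinarith [hc.1]
      · nlinarith [hc.2]
  refine ⟨C + Real.log 2 + (Real.log 4 + 4) + 3/2 * (Real.log 4 + 5), by positivity, fun N hN => ?_⟩
  have s1 := abs_le.1 (vM_bound N hN)
  have s2 := abs_le.1 (chi_vM_bound N)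
  have s3 : ∑ n ∈ Ioc 0 N, (1 + chi n) * vonMangoldt n / n =
      ∑ d ∈ Ioc 0 N, vonMangoldt d / d + ∑ d ∈ Ioc 0 N, chi d * vonMangoldt d / d := by
    rw [← sum_add_distrib]; exact sum_congr rfl fun _ _ => by ring
  have s4 : ∑ n ∈ Ioc 0 N, q n ≤ C := hs.sum_le_tsum _ (fun n _ => hq0 n)
  have s5 : ∑ n ∈ Ioc 0 N, e n ≤ Real.log 2 := by
    simp only [e]
    rw [sum_ite_eq']
    split_ifs <;> linarith
  have s6 : 2 * ∑ n ∈ Ioc 0 N, aa n ≤ ∑ n ∈ Ioc 0 N, (1 + chi n) * vonMangoldt n / n := by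
    rw [mul_sum]; exact sum_le_sum fun n _ => (pt n).1
  have s7 : ∑ n ∈ Ioc 0 N, (1 + chi n) * vonMangoldt n / n ≤
      2 * ∑ n ∈ Ioc 0 N, aa n + 2 * ∑ n ∈ Ioc 0 N, q n + ∑ n ∈ Ioc 0 N, e n := by
    rw [mul_sum, mul_sum, ← sum_add_distrib, ← sum_add_distrib]; exact sum_le_sum fun n _ => (pt n).2
  rw [abs_le]
  constructor <;> linarith [s1.1, s1.2, s2.1, s2.2]

/-- primes `≡ 1 mod 4` up to `N` -/
def P1 (N : ℕ) : Finset ℕ := (Ioc 0 N).filter fun p => p.Prime ∧ p % 4 = 1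

lemma loglog_sum (n : ℕ) (hn : 2 ≤ n) :
    Real.log (Real.log n) - Real.log (Real.log 2) - 1 / Real.log 2 ≤
      ∑ k ∈ Ico 3 (n+1), (1 / Real.log k) * (Real.log k - Real.log (k-1)) ∧
    ∑ k ∈ Ico 3 (n+1), (1 / Real.log k) * (Real.log k - Real.log (k-1)) ≤
      Real.log (Real.log n) - Real.log (Real.log 2) := by
  have main : Real.log (Real.log n) - Real.log (Real.log 2) - 1 / Real.log 2 + 1 / Real.log n ≤
      ∑ k ∈ Ico 3 (n+1), (1 / Real.log k) * (Real.log k - Real.log (k-1)) ∧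
    ∑ k ∈ Ico 3 (n+1), (1 / Real.log k) * (Real.log k - Real.log (k-1)) ≤
      Real.log (Real.log n) - Real.log (Real.log 2) := by
    induction n, hn using Nat.le_induction with
    | base => simp
    | succ n hn ih =>
      rw [sum_Ico_succ_top (by omega)]
      have hnr : (2:ℝ) ≤ n := by exact_mod_cast hn
      push_cast
      rw [show (n:ℝ) + 1 - 1 = n by ring]
      set a := Real.log n with ha
      set b := Real.log ((n:ℝ)+1) with hb
      have ha0 : 0 < a := Real.log_pos (by linarith)
      have hab : a ≤ b := Real.log_le_log (by linarith) (by linarith)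
      have hb0 : 0 < b := by linarith
      have hba : b - a ≤ 1 := by
        rw [ha, hb, ← Real.log_div (by linarith) (by linarith)]
        have : ((n:ℝ)+1)/n ≤ 2 := by rw [div_le_iff₀ (by linarith)]; linarith
        have := Real.log_le_sub_one_of_pos (show 0 < ((n:ℝ)+1)/n by positivity)
        linarith
      have u1 : (1 / b) * (b - a) ≤ Real.log b - Real.log a := by
        have := Real.log_le_sub_one_of_pos (show 0 < a / b by positivity)
        rw [Real.log_div ha0.ne' hb0.ne'] at this
        have e : (1 / b) * (b - a) = 1 - a / b := by field_simp
        linarith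
      have u2 : Real.log b - Real.log a ≤ (1 / b) * (b - a) + (1 / a - 1 / b) := by
        have := Real.log_le_sub_one_of_pos (show 0 < b / a by positivity)
        rw [Real.log_div hb0.ne' ha0.ne'] at this
        have e : b / a - 1 = (1 / b) * (b - a) + (1 / a - 1 / b) * (b - a) := by field_simp; ring
        have : 0 ≤ 1 / a - 1 / b := sub_nonneg.2 (one_div_le_one_div_of_le ha0 hab)
        nlinarith
      constructor <;> linarith [ih.1, ih.2]
  refine ⟨?_, main.2⟩
  have : 0 ≤ 1 / Real.log n := by have := Real.log_natCast_nonneg n; positivity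
  linarith [main.1]

lemma mertens : ∃ B : ℝ, 0 ≤ B ∧ ∀ N : ℕ, 2 ≤ N →
    |∑ p ∈ P1 N, 1 / (p : ℝ) - 1/2 * Real.log (Real.log N)| ≤ B := by
  obtain ⟨B, hB0, hB⟩ := aa_sum
  have hl2 : 0 < Real.log 2 := Real.log_pos (by norm_num)
  set D := 2 * B / Real.log 3 + |Real.log (Real.log 2)| + 1 / Real.log 2 with hD
  have hl3 : 0 < Real.log 3 := Real.log_pos (by norm_num)
  refine ⟨D, by positivity, fun N hN => ?_⟩
  have e1 : ∑ p ∈ P1 N, 1 / (p : ℝ) = ∑ k ∈ Ico 3 (N+1), (1 / Real.log k) * aa k := by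
    rw [P1, sum_filter, ← Ioc_union_Ioc_eq_Ioc (Nat.zero_le 2) hN,
        sum_union (Ioc_disjoint_Ioc_of_le le_rfl)]
    have h1 : Ioc 2 N = Ico (3) (N+1) := by ext x; simp only [mem_Ioc, mem_Ico]; omega
    have h2 : Ioc 0 2 = ({1, 2} : Finset ℕ) := by decide
    rw [h1, h2]
    simp only [mem_singleton, OfNat.one_ne_ofNat, not_false_eq_true, sum_insert, sum_singleton]
    rw [if_neg (by norm_num), if_neg (by norm_num), zero_add, zero_add]
    refine sum_congr rfl fun k hk => ?_
    have hk3 := (mem_Ico.1 hk).1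
    have : 0 < Real.log k := Real.log_pos (by exact_mod_cast (by omega : 1 < k))
    unfold aa
    split_ifs
    · field_simp
    · simp
  have bsum : ∀ n, 3 ≤ n → |∑ k ∈ Ico 3 n, (aa k - 1/2 * (Real.log k - Real.log (k-1)))| ≤ 2 * B := by
    intro n hn
    have t : ∀ n, 3 ≤ n → ∑ k ∈ Ico 3 n, (aa k - 1/2 * (Real.log k - Real.log (k-1))) =
        (∑ k ∈ Ioc 0 (n-1), aa k - 1/2 * Real.log (n-1 : ℕ)) - (∑ k ∈ Ioc 0 2, aa k - 1/2 * Real.log (2 : ℕ)) := by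
      intro n hn
      induction n, hn using Nat.le_induction with
      | base => simp
      | succ n hn ih =>
        rw [sum_Ico_succ_top hn, ih]
        obtain ⟨m, rfl⟩ : ∃ m, n = m + 1 := ⟨n-1, by omega⟩
        simp only [Nat.add_sub_cancel]
        rw [← Order.succ_eq_add_one m, ← Finset.insert_Ioc_right_eq_Ioc_succ (by simp), sum_insert (by simp),
          Order.succ_eq_add_one]
        push_cast
        ring_nf
    rw [t n hn]
    have a1 := abs_le.1 (hB (n-1) (by omega))
    have a2 := abs_le.1 (hB 2 (by omega))
    rw [abs_le]
    constructor <;> linarith [a1.1, a1.2, a2.1, a2.2]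
  have ab := abel_bound (fun k => 1 / Real.log k) (fun k => aa k - 1/2 * (Real.log k - Real.log (k-1))) 3
    (2*B) (by
      intro k hk
      have : (3:ℝ) ≤ k := by exact_mod_cast hk
      apply one_div_le_one_div_of_le (Real.log_pos (by linarith))
      exact Real.log_le_log (by linarith) (by push_cast; linarith))
    (by
      intro k hk
      have := Real.log_natCast_nonneg k
      positivity) bsum (N+1) (by omega)
  have e2 : ∑ k ∈ Ico 3 (N+1), (1 / Real.log k) * (aa k - 1/2 * (Real.log k - Real.log (k-1))) =
      ∑ p ∈ P1 N, 1 / (p : ℝ) - 1/2 * ∑ k ∈ Ico 3 (N+1), (1 / Real.log k) * (Real.log k - Real.log (k-1)) := by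
    rw [e1, mul_sum, ← sum_sub_distrib]; exact sum_congr rfl fun _ _ => by ring
  rw [e2] at ab
  have ab' := abs_le.1 ab
  have ll := loglog_sum N hN
  have h3 := abs_le.1 (le_refl |Real.log (Real.log 2)|)
  have h5 : 2 * B * (1 / Real.log (3:ℕ)) = 2 * B / Real.log 3 := by push_cast; ring
  rw [h5] at ab'
  have h6 : 0 < 1 / Real.log 2 := by positivity
  rw [abs_le]
  constructor <;> linarith [ab'.1, ab'.2, ll.1, ll.2, h3.1, h3.2]

lemma sum_log_div (B : ℝ) (hB : ∀ N : ℕ, 1 ≤ N → |∑ n ∈ Ioc 0 N, aa n - 1/2 * Real.log N| ≤ B)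
    (N : ℕ) (hN : 1 ≤ N) : ∑ p ∈ P1 N, Real.log p / p ≤ 1/2 * Real.log N + B := by
  have := (abs_le.1 (hB N hN)).2
  have e : ∑ p ∈ P1 N, Real.log p / p = ∑ n ∈ Ioc 0 N, aa n := by
    rw [P1, sum_filter]; rfl
  linarith

/-- Chebyshev lower bound -/
lemma cheb_lower : ∃ K c x₀ : ℝ, 1 < K ∧ 0 < c ∧ 1 < x₀ ∧ ∀ x : ℝ, x₀ ≤ x → ∃ Q : Finset ℕ,
    (∀ p ∈ Q, p.Prime ∧ p % 4 = 1 ∧ x / K ≤ p ∧ (p : ℝ) < x) ∧ c * (x / Real.log x) ≤ Q.card := by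
  obtain ⟨B, hB0, hB⟩ := aa_sum
  set K := 2 * Real.exp (4 * B + 2) with hK
  have hK2 : 2 < K := by
    have : 1 < Real.exp (4 * B + 2) := Real.one_lt_exp_iff.2 (by linarith)
    linarith
  refine ⟨K, 1/K, 2*K, by linarith, by positivity, by linarith, fun x hx => ?_⟩
  have hx0 : 0 < x := by linarith
  have hxK : 2 ≤ x / K := by rw [le_div_iff₀ (by linarith)]; linarith
  set n := ⌈x⌉₊ - 1 with hn
  set k := ⌈x/K⌉₊ - 1 with hk
  have hcx : 1 ≤ ⌈x⌉₊ := Nat.one_le_ceil_iff.2 hx0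
  have hck : 2 ≤ ⌈x/K⌉₊ := by
    have := Nat.le_ceil (x/K)
    exact_mod_cast hxK.trans this
  have hn1 : (n : ℝ) < x := by
    have := Nat.ceil_lt_add_one hx0.le
    rw [hn]; push_cast [hcx]; linarith
  have hn2 : x - 1 ≤ n := by
    have := Nat.le_ceil x
    rw [hn]; push_cast [hcx]; linarith
  have hk1 : (k : ℝ) < x/K := by
    have := Nat.ceil_lt_add_one (show 0 ≤ x/K by linarith)
    rw [hk, Nat.cast_sub (by omega)]; push_cast; linarith
  have hk0 : 1 ≤ k := by omega
  have hk0r : (1:ℝ) ≤ k := by exact_mod_cast hk0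
  have hkn : k ≤ n := by
    have : x/K ≤ x := div_le_self hx0.le (by linarith)
    have := Nat.ceil_le_ceil this
    omega
  have hlx : 0 < Real.log x := Real.log_pos (by linarith)
  refine ⟨(Ioc k n).filter fun p => p.Prime ∧ p % 4 = 1, ?_, ?_⟩
  · intro p hp
    simp only [mem_filter, mem_Ioc] at hp
    refine ⟨hp.2.1, hp.2.2, ?_, ?_⟩
    · have : ⌈x/K⌉₊ ≤ p := by omega
      exact Nat.ceil_le.1 this
    · refine lt_of_le_of_lt ?_ hn1
      exact_mod_cast hp.1.2
  · have s1 : ∑ m ∈ Ioc 0 n, aa m = ∑ m ∈ Ioc 0 k, aa m + ∑ m ∈ Ioc k n, aa m := by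
      rw [← Ioc_union_Ioc_eq_Ioc (Nat.zero_le k) hkn, sum_union (Ioc_disjoint_Ioc_of_le le_rfl)]
    have b1 := abs_le.1 (hB n (by omega))
    have b2 := abs_le.1 (hB k (by omega))
    have hlog : 4 * B + 2 ≤ Real.log n - Real.log k := by
      rw [← Real.log_div (by linarith) (by linarith), Real.le_log_iff_exp_le (by apply div_pos <;> linarith),
        le_div_iff₀ (by linarith)]
      have h1 : Real.exp (4*B+2) = K / 2 := by rw [hK]; ring
      rw [h1]
      have : K * k ≤ x := by
        have := (lt_div_iff₀ (show 0 < K by linarith)).1 hk1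
        linarith
      linarith
    have s2 : 1 ≤ ∑ m ∈ Ioc k n, aa m := by linarith [b1.1, b1.2, b2.1, b2.2]
    have s3 : ∑ m ∈ Ioc k n, aa m ≤
        ((Ioc k n).filter fun p => p.Prime ∧ p % 4 = 1).card * (Real.log x * K / x) := by
      have : ∑ m ∈ Ioc k n, aa m = ∑ m ∈ (Ioc k n).filter fun p => p.Prime ∧ p % 4 = 1, Real.log m / m := by
        rw [sum_filter]; rfl
      rw [this, ← nsmul_eq_mul]
      refine sum_le_card_nsmul _ _ _ fun p hp => ?_
      simp only [mem_filter, mem_Ioc] at hp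
      have hp1 : x / K ≤ p := by
        have : ⌈x/K⌉₊ ≤ p := by omega
        exact Nat.ceil_le.1 this
      have hp2 : (p:ℝ) ≤ x := by
        have : (p:ℝ) ≤ n := by exact_mod_cast hp.1.2
        linarith
      have h1 : Real.log p ≤ Real.log x := Real.log_le_log (by linarith) hp2
      calc Real.log p / p ≤ Real.log x / (x/K) :=
            div_le_div₀ hlx.le h1 (by linarith) hp1
        _ = _ := by field_simp
    have s4 := s2.trans s3
    have : 1/K * (x / Real.log x) = 1 / (Real.log x * K / x) := by field_simp
    rw [this, div_le_iff₀ (by positivity)]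
    exact s4

end PellAux



namespace PellAux
open Finset

lemma dc (s : Finset ℕ) (k : ℕ) (g : Finset ℕ → ℕ → ℝ) :
    ∑ U ∈ powersetCard (k+1) s, ∑ i ∈ U, g U i =
    ∑ T ∈ powersetCard k s, ∑ i ∈ s \ T, g (insert i T) i := by
  rw [sum_sigma', sum_sigma']
  refine sum_bij' (fun x _ => ⟨x.1.erase x.2, x.2⟩) (fun x _ => ⟨insert x.2 x.1, x.2⟩) ?_ ?_ ?_ ?_ ?_
  · rintro ⟨U, i⟩ h
    simp only [mem_sigma, mem_powersetCard, mem_sdiff] at h ⊢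
    refine ⟨⟨(erase_subset _ _).trans h.1.1, ?_⟩, h.1.1 h.2, by simp⟩
    rw [card_erase_of_mem h.2]; omega
  · rintro ⟨T, i⟩ h
    simp only [mem_sigma, mem_powersetCard, mem_sdiff] at h ⊢
    refine ⟨⟨insert_subset h.2.1 h.1.1, ?_⟩, by simp⟩
    rw [card_insert_of_notMem h.2.2]; omega
  · rintro ⟨U, i⟩ h
    simp only [mem_sigma] at h
    simp [insert_erase h.2]
  · rintro ⟨T, i⟩ h
    simp only [mem_sigma, mem_sdiff] at h
    simp [erase_insert h.2.2]
  · rintro ⟨U, i⟩ h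
    simp only [mem_sigma] at h
    simp [insert_erase h.2]

noncomputable def es (w : ℕ → ℝ) (s : Finset ℕ) (k : ℕ) : ℝ :=
  ∑ T ∈ powersetCard k s, ∏ i ∈ T, w i

lemma es_zero (w : ℕ → ℝ) (s : Finset ℕ) : es w s 0 = 1 := by simp [es]

lemma es_nonneg (w : ℕ → ℝ) (hw : ∀ i, 0 ≤ w i) (s : Finset ℕ) (k : ℕ) : 0 ≤ es w s k :=
  sum_nonneg fun _ _ => prod_nonneg fun i _ => hw i

/-- weighted double counting -/
lemma es_weight (w v : ℕ → ℝ) (s : Finset ℕ) (k : ℕ) :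
    ∑ U ∈ powersetCard (k+1) s, (∏ i ∈ U, w i) * ∑ i ∈ U, v i =
    ∑ T ∈ powersetCard k s, (∏ i ∈ T, w i) * ∑ i ∈ s \ T, w i * v i := by
  simp_rw [mul_sum]
  rw [dc s k (fun U i => (∏ i ∈ U, w i) * v i)]
  refine sum_congr rfl fun T hT => sum_congr rfl fun i hi => ?_
  rw [prod_insert (mem_sdiff.1 hi).2]; ring

lemma es_weight_le (w v : ℕ → ℝ) (hw : ∀ i, 0 ≤ w i) (hv : ∀ i, 0 ≤ v i) (s : Finset ℕ) (k : ℕ) :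
    ∑ U ∈ powersetCard (k+1) s, (∏ i ∈ U, w i) * ∑ i ∈ U, v i ≤
    es w s k * ∑ i ∈ s, w i * v i := by
  rw [es_weight, es, sum_mul]
  refine sum_le_sum fun T _ => mul_le_mul_of_nonneg_left ?_ (prod_nonneg fun i _ => hw i)
  exact sum_le_sum_of_subset_of_nonneg sdiff_subset fun i _ _ => mul_nonneg (hw i) (hv i)

lemma es_succ (w : ℕ → ℝ) (s : Finset ℕ) (k : ℕ) :
    ((k:ℝ)+1) * es w s (k+1) = ∑ T ∈ powersetCard k s, (∏ i ∈ T, w i) * ∑ i ∈ s \ T, w i := by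
  have h := es_weight w (fun _ => 1) s k
  simp only [mul_one] at h
  rw [← h, es, mul_sum]
  refine sum_congr rfl fun U hU => ?_
  rw [sum_const, (mem_powersetCard.1 hU).2]; simp; ring

lemma es_le (w : ℕ → ℝ) (hw : ∀ i, 0 ≤ w i) (s : Finset ℕ) (k : ℕ) :
    es w s k ≤ (∑ i ∈ s, w i) ^ k / k.factorial := by
  induction k with
  | zero => simp [es_zero]
  | succ k ih =>
    have hS : 0 ≤ ∑ i ∈ s, w i := sum_nonneg fun i _ => hw i
    have h := es_weight_le w (fun _ => 1) hw (fun _ => zero_le_one) s k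
    have h2 : ((k:ℝ)+1) * es w s (k+1) ≤ es w s k * ∑ i ∈ s, w i := by
      rw [es_weight] at h
      rw [es_succ]
      simpa using h
    have h3 := h2.trans (mul_le_mul_of_nonneg_right ih hS)
    rw [Nat.factorial_succ]
    push_cast
    rw [le_div_iff₀ (by positivity)]
    calc es w s (k+1) * (((k:ℝ)+1) * k.factorial) = (((k:ℝ)+1) * es w s (k+1)) * k.factorial := by ring
      _ ≤ ((∑ i ∈ s, w i) ^ k / k.factorial * ∑ i ∈ s, w i) * k.factorial :=
        mul_le_mul_of_nonneg_right h3 (by positivity)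
      _ = _ := by field_simp; ring

lemma es_ge (w : ℕ → ℝ) (hw : ∀ i, 0 ≤ w i) (s : Finset ℕ) (hS : 0 < ∑ i ∈ s, w i) (k : ℕ) :
    (∑ i ∈ s, w i) ^ k / k.factorial * (1 - (∑ i ∈ s, w i * w i) * k ^ 2 / (∑ i ∈ s, w i) ^ 2) ≤ es w s k := by
  set S := ∑ i ∈ s, w i with hSd
  set P := ∑ i ∈ s, w i * w i with hP
  have hP0 : 0 ≤ P := sum_nonneg fun i _ => mul_nonneg (hw i) (hw i)
  induction k with
  | zero => simp [es_zero]
  | succ k ih =>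
    have h1 : ((k:ℝ)+1) * es w s (k+1) = es w s k * S - ∑ T ∈ powersetCard k s, (∏ i ∈ T, w i) * ∑ i ∈ T, w i := by
      rw [es_succ, es, sum_mul, ← sum_sub_distrib]
      refine sum_congr rfl fun T hT => ?_
      rw [← mul_sub, hSd, ← sum_sdiff (mem_powersetCard.1 hT).1]; ring
    have h2 : ∑ T ∈ powersetCard k s, (∏ i ∈ T, w i) * ∑ i ∈ T, w i ≤ S ^ (k+1) / k.factorial * (P * k / S ^ 2) := by
      rcases k with _ | j
      · simp
      · refine (es_weight_le w w hw hw s j).trans ?_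
        refine (mul_le_mul_of_nonneg_right (es_le w hw s j) hP0).trans (le_of_eq ?_)
        rw [← hSd, Nat.factorial_succ]; push_cast
        field_simp
        ring
    have h3 := mul_le_mul_of_nonneg_right ih hS.le
    have h4 : S ^ (k+1) / k.factorial * (1 - P * ((k+1 : ℕ):ℝ) ^ 2 / S ^ 2) ≤ ((k:ℝ)+1) * es w s (k+1) := by
      rw [h1]
      have e : S ^ (k+1) / k.factorial * (1 - P * ((k+1 : ℕ):ℝ) ^ 2 / S ^ 2) =
        S ^ k / k.factorial * (1 - P * k ^ 2 / S ^ 2) * S - S ^ (k+1) / k.factorial * (P * k / S ^ 2)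
        - S ^ (k+1) / k.factorial * (P * (k+1) / S ^ 2) := by
        push_cast; ring
      have : 0 ≤ S ^ (k+1) / k.factorial * (P * (k+1) / S ^ 2) := by positivity
      linarith
    rw [Nat.factorial_succ]
    have : S ^ (k+1) / (((k+1) * k.factorial : ℕ) : ℝ) * (1 - P * ((k+1 : ℕ):ℝ) ^ 2 / S ^ 2) =
      (S ^ (k+1) / k.factorial * (1 - P * ((k+1 : ℕ):ℝ) ^ 2 / S ^ 2)) / ((k:ℝ)+1) := by
      push_cast; field_simp
    rw [this, div_le_iff₀ (by positivity)]
    linarith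

end PellAux



namespace PellAux
open Finset

/-- primes `≡ 1, 2 mod 4` up to `N` -/
def P2 (N : ℕ) : Finset ℕ := (Ioc 0 N).filter fun p => p.Prime ∧ (p % 4 = 1 ∨ p % 4 = 2)

noncomputable def EE (r : ℕ) (N : ℝ) : Finset (Finset ℕ) :=
  (powersetCard r (P2 ⌈N⌉₊)).filter (fun U => ((∏ i ∈ U, i : ℕ) : ℝ) < N)

lemma prime_of_mem_P2 {n p : ℕ} (h : p ∈ P2 n) : p.Prime := by
  simp only [P2, mem_filter] at h; exact h.2.1

lemma squarefree_prod (U : Finset ℕ) (h : ∀ p ∈ U, p.Prime) : Squarefree (∏ i ∈ U, i) := by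
  refine Finset.squarefree_prod_of_pairwise_isCoprime (fun p hp q hq hpq ↦ ?_) ?_
  · simp only [Function.onFun]
    exact Nat.coprime_iff_isRelPrime.1 ((Nat.coprime_primes (h p hp) (h q hq)).2 hpq)
  · intro p hp; exact (h p hp).prime.squarefree

lemma ncard_eq (r : ℕ) (N : ℝ) : (PellDr r N).ncard = (EE r N).card := by
  have himg : PellDr r N = ((EE r N).image fun U => ∏ i ∈ U, i : Finset ℕ) := by
    ext d
    simp only [PellDr, PellD, Set.mem_ofPred_eq, coe_image, Set.mem_image, mem_coe, EE, mem_filter,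
      mem_powersetCard]
    constructor
    · rintro ⟨⟨hsq, hpos, hp⟩, hN, hr⟩
      refine ⟨d.primeFactors, ⟨⟨?_, hr⟩, ?_⟩, Nat.prod_primeFactors_of_squarefree hsq⟩
      · intro p hpd
        obtain ⟨h1, h2, _⟩ := Nat.mem_primeFactors.1 hpd
        simp only [P2, mem_filter, mem_Ioc]
        refine ⟨⟨h1.pos, ?_⟩, h1, hp p h1 h2⟩
        have h3 : p ≤ d := Nat.le_of_dvd hpos h2
        have h4 : (d : ℝ) ≤ (⌈N⌉₊ : ℝ) := hN.le.trans (Nat.le_ceil N)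
        exact h3.trans (by exact_mod_cast h4)
      · rw [Nat.prod_primeFactors_of_squarefree hsq]; exact hN
    · rintro ⟨U, ⟨⟨hU, hr⟩, hN⟩, rfl⟩
      have hpr : ∀ p ∈ U, p.Prime := fun p hp => prime_of_mem_P2 (hU hp)
      refine ⟨⟨squarefree_prod U hpr, prod_pos fun p hp => (hpr p hp).pos, ?_⟩, hN, ?_⟩
      · intro p hp hd
        have : p ∈ (∏ i ∈ U, i).primeFactors :=
          Nat.mem_primeFactors.2 ⟨hp, hd, (prod_pos fun p hp => (hpr p hp).pos).ne'⟩
        rw [Nat.primeFactors_prod hpr] at this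
        have := hU this
        simp only [P2, mem_filter] at this
        exact this.2.2
      · rw [Nat.primeFactors_prod hpr]; exact hr
  rw [himg, Set.ncard_coe_finset, card_image_of_injOn]
  intro U hU V hV hUV
  simp only [EE, mem_coe, mem_filter, mem_powersetCard] at hU hV
  have h1 := Nat.primeFactors_prod fun p hp => prime_of_mem_P2 (hU.1.1 hp)
  have h2 := Nat.primeFactors_prod fun p hp => prime_of_mem_P2 (hV.1.1 hp)
  rw [← h1, ← h2]
  simp only at hUV
  rw [hUV]

lemma upper_core (N : ℝ) (hN : 1 < N) (k : ℕ) :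
    ((EE (k+1) N).card : ℝ) ≤ (2 * Real.log 4 * (N / Real.log N) + √N * ∑ p ∈ P2 ⌈N⌉₊, 1 / (p : ℝ)) *
      ((∑ p ∈ P2 ⌈N⌉₊, 1 / (p : ℝ)) ^ k / k.factorial) := by
  set s := P2 ⌈N⌉₊ with hs
  set S := ∑ p ∈ s, 1 / (p : ℝ) with hS
  have hN0 : 0 < N := by linarith
  have hS0 : 0 ≤ S := sum_nonneg fun _ _ => by positivity
  have hlog : 0 < Real.log N := Real.log_pos hN
  set w : ℕ → ℝ := fun p => 1 / (p : ℝ) with hw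
  have hw0 : ∀ i, 0 ≤ w i := fun i => by simp only [hw]; positivity
  have hpw : ∀ T : Finset ℕ, ∏ i ∈ T, w i = 1 / ((∏ i ∈ T, i : ℕ) : ℝ) := by
    intro T; simp [hw, prod_inv_distrib]
  have hppos : ∀ j, ∀ T ∈ powersetCard j s, 0 < ((∏ i ∈ T, i : ℕ) : ℝ) := by
    intro j T hT
    have : 0 < ∏ i ∈ T, i := prod_pos fun p hp => (prime_of_mem_P2 ((mem_powersetCard.1 hT).1 hp)).pos
    exact_mod_cast this
  -- small part
  have small : (((EE (k+1) N).filter fun U => ((∏ i ∈ U, i : ℕ) : ℝ) < √N).card : ℝ) ≤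
      √N * S * (S ^ k / k.factorial) := by
    have h1 : (((EE (k+1) N).filter fun U => ((∏ i ∈ U, i : ℕ) : ℝ) < √N).card : ℝ) ≤ √N * es w s (k+1) := by
      rw [es, mul_sum, card_eq_sum_ones, Nat.cast_sum]
      refine (sum_le_sum (g := fun U => √N * ∏ i ∈ U, w i) ?_).trans (sum_le_sum_of_subset_of_nonneg ?_ ?_)
      · intro U hU
        simp only [mem_filter, EE] at hU
        rw [hpw, mul_one_div, le_div_iff₀ (hppos _ U hU.1.1)]
        push_cast at hU ⊢; linarith [hU.2]
      · intro U hU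
        simp only [mem_filter, EE] at hU
        exact hU.1.1
      · intro U _ _
        exact mul_nonneg (Real.sqrt_nonneg _) (prod_nonneg fun i _ => hw0 i)
    refine h1.trans ?_
    rw [mul_assoc]
    refine mul_le_mul_of_nonneg_left ((es_le w hw0 s (k+1)).trans ?_) (Real.sqrt_nonneg _)
    rw [pow_succ, mul_comm, ← mul_div_assoc]
    refine div_le_div_of_nonneg_left (by positivity) (by positivity) ?_
    exact_mod_cast Nat.factorial_le (by omega)
  -- large part
  have logsum : ∑ U ∈ EE (k+1) N, Real.log ((∏ i ∈ U, i : ℕ) : ℝ) ≤ Real.log 4 * N * (S ^ k / k.factorial) := by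
    have e1 : ∑ U ∈ EE (k+1) N, Real.log ((∏ i ∈ U, i : ℕ) : ℝ) =
        ∑ U ∈ powersetCard (k+1) s, ∑ i ∈ U, if ((∏ i ∈ U, i : ℕ) : ℝ) < N then Real.log i else 0 := by
      rw [EE, sum_filter]
      refine sum_congr rfl fun U hU => ?_
      split_ifs with h
      · push_cast
        rw [Real.log_prod]
        intro i hi
        have := (prime_of_mem_P2 ((mem_powersetCard.1 hU).1 hi)).pos
        positivity
      · simp
    rw [e1, dc s k (fun U i => if ((∏ i ∈ U, i : ℕ) : ℝ) < N then Real.log i else 0)]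
    calc _ ≤ ∑ T ∈ powersetCard k s, Real.log 4 * N * ∏ i ∈ T, w i := by
          refine sum_le_sum fun T hT => ?_
          have hT0 := hppos _ T hT
          rw [hpw, mul_one_div]
          have hth := Chebyshev.theta_le_log4_mul_x (show 0 ≤ N / ((∏ i ∈ T, i : ℕ) : ℝ) by positivity)
          rw [mul_div_assoc]
          refine le_trans ?_ hth
          rw [Chebyshev.theta, ← sum_filter]
          refine sum_le_sum_of_subset_of_nonneg ?_ ?_
          · intro i hi
            simp only [mem_filter, mem_sdiff] at hi
            have hip := prime_of_mem_P2 hi.1.1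
            simp only [mem_filter, mem_Ioc]
            refine ⟨⟨hip.pos, ?_⟩, hip⟩
            refine Nat.le_floor ?_
            rw [le_div_iff₀ hT0]
            have := hi.2
            rw [prod_insert hi.1.2] at this
            push_cast at this ⊢
            exact this.le
          · intro i _ _; exact Real.log_natCast_nonneg i
      _ = Real.log 4 * N * es w s k := by rw [es, mul_sum]
      _ ≤ _ := by
        refine mul_le_mul_of_nonneg_left (es_le w hw0 s k) ?_
        have : 0 < Real.log 4 := Real.log_pos (by norm_num)
        positivity
  have large : (((EE (k+1) N).filter fun U => ¬ ((∏ i ∈ U, i : ℕ) : ℝ) < √N).card : ℝ) ≤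
      2 * Real.log 4 * (N / Real.log N) * (S ^ k / k.factorial) := by
    have h1 : (((EE (k+1) N).filter fun U => ¬ ((∏ i ∈ U, i : ℕ) : ℝ) < √N).card : ℝ) * (Real.log N / 2) ≤
        ∑ U ∈ EE (k+1) N, Real.log ((∏ i ∈ U, i : ℕ) : ℝ) := by
      rw [← nsmul_eq_mul]
      refine (card_nsmul_le_sum _ (fun U => Real.log ((∏ i ∈ U, i : ℕ) : ℝ)) _ ?_).trans
        (sum_le_sum_of_subset_of_nonneg (filter_subset _ _) ?_)
      · intro U hU
        rw [← Real.log_sqrt hN0.le]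
        exact Real.log_le_log (Real.sqrt_pos.2 hN0) (not_lt.1 (mem_filter.1 hU).2)
      · intro U _ _; exact Real.log_natCast_nonneg _
    have h2 := h1.trans logsum
    rw [← le_div_iff₀ (by positivity)] at h2
    refine h2.trans (le_of_eq ?_)
    field_simp
  have hsplit := card_filter_add_card_filter_not (s := EE (k+1) N) (fun U => ((∏ i ∈ U, i : ℕ) : ℝ) < √N)
  rw [← hsplit]; push_cast at small large ⊢
  linarith

lemma P2_sum : ∃ D : ℝ, 0 ≤ D ∧ ∀ N : ℝ, 2 ≤ N →
    ∑ p ∈ P2 ⌈N⌉₊, 1 / (p : ℝ) ≤ 1/2 * Real.log (Real.log N) + D := by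
  obtain ⟨B, hB0, hB⟩ := mertens
  refine ⟨B + 1/2 + Real.log 2, by have := Real.log_pos one_lt_two; positivity, fun N hN => ?_⟩
  have hc : 2 ≤ ⌈N⌉₊ := by
    have := hN.trans (Nat.le_ceil N); exact_mod_cast this
  have h1 := (abs_le.1 (hB ⌈N⌉₊ hc)).2
  have hcr : (2:ℝ) ≤ ⌈N⌉₊ := by exact_mod_cast hc
  have hl : 0 < Real.log N := Real.log_pos (by linarith)
  have h2 : Real.log (Real.log ⌈N⌉₊) ≤ Real.log 2 + Real.log (Real.log N) := by
    rw [← Real.log_mul (by norm_num) hl.ne']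
    refine Real.log_le_log (Real.log_pos (by linarith)) ?_
    have : 2 * Real.log N = Real.log (N^2) := by rw [Real.log_pow]; norm_num
    rw [this]
    refine Real.log_le_log (by linarith) ?_
    have := Nat.ceil_lt_add_one (show 0 ≤ N by linarith)
    nlinarith
  have h3 : ∑ p ∈ P2 ⌈N⌉₊, 1 / (p : ℝ) ≤ ∑ p ∈ insert 2 (P1 ⌈N⌉₊), 1 / (p : ℝ) := by
    refine sum_le_sum_of_subset_of_nonneg ?_ fun _ _ _ => by positivity
    intro p hp
    simp only [P2, P1, mem_filter, mem_insert] at hp ⊢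
    rcases hp.2.2 with h | h
    · exact Or.inr ⟨hp.1, hp.2.1, h⟩
    · left
      rcases hp.2.1.eq_two_or_odd with h' | h'
      · exact h'
      · omega
  have h4 : (2:ℕ) ∉ P1 ⌈N⌉₊ := by simp [P1]
  rw [sum_insert h4] at h3
  push_cast at h3
  have := Real.log_pos one_lt_two
  linarith

lemma ev_log_sq : ∀ᶠ N : ℝ in Filter.atTop, 2 * (Real.log N) ^ 2 ≤ √N := by
  have h := isLittleO_log_rpow_rpow_atTop (s := 1/2) 2 (by norm_num)
  have := h.def (show (0:ℝ) < 1/2 by norm_num)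
  filter_upwards [this, Filter.eventually_gt_atTop 1] with N hN h1
  have hl : 0 < Real.log N := Real.log_pos h1
  rw [Real.norm_of_nonneg (by positivity), Real.norm_of_nonneg (by positivity), ← Real.sqrt_eq_rpow] at hN
  norm_num at hN
  linarith

lemma ev_loglog (D : ℝ) : ∀ᶠ N : ℝ in Filter.atTop, D ≤ Real.log (Real.log N) :=
  (Real.tendsto_log_atTop.comp Real.tendsto_log_atTop).eventually_ge_atTop D

lemma ev_log (D : ℝ) : ∀ᶠ N : ℝ in Filter.atTop, D ≤ Real.log N :=
  Real.tendsto_log_atTop.eventually_ge_atTop D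

lemma upper (A : ℝ) : ∃ C : ℝ, 0 < C ∧ ∀ᶠ N : ℝ in Filter.atTop, ∀ k : ℕ,
    (k : ℝ) + 1 ≤ A * Real.log (Real.log N) →
    ((EE (k+1) N).card : ℝ) ≤ C * (N / Real.log N) * ((1 / 2) * Real.log (Real.log N)) ^ k / k.factorial := by
  obtain ⟨D, hD0, hD⟩ := P2_sum
  have h4 : 0 < Real.log 4 := Real.log_pos (by norm_num)
  refine ⟨(2 * Real.log 4 + 1) * Real.exp (2 * D * A), by positivity, ?_⟩
  filter_upwards [ev_log_sq, ev_loglog 1, ev_log (D+1), Filter.eventually_ge_atTop 2] with N e1 e2 e3 e4 k hk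
  set LL := Real.log (Real.log N) with hLL
  set S := ∑ p ∈ P2 ⌈N⌉₊, 1 / (p : ℝ) with hS
  have hS0 : 0 ≤ S := sum_nonneg fun _ _ => by positivity
  have hSD : S ≤ 1/2 * LL + D := hD N e4
  have hl : 0 < Real.log N := by linarith
  have hLl : LL ≤ Real.log N := (Real.log_le_self hl.le)
  have hN0 : 0 < N := by linarith
  have hup := upper_core N (by linarith) k
  rw [← hS] at hup
  have c1 : √N * S ≤ N / Real.log N := by
    rw [le_div_iff₀ hl]
    have : S * Real.log N ≤ √N := by
      refine le_trans ?_ e1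
      nlinarith
    calc √N * S * Real.log N = √N * (S * Real.log N) := by ring
      _ ≤ √N * √N := mul_le_mul_of_nonneg_left this (Real.sqrt_nonneg _)
      _ = N := Real.mul_self_sqrt hN0.le
  have c2 : S ^ k ≤ (1/2 * LL) ^ k * Real.exp (2 * D * A) := by
    have a1 : S ≤ (1/2 * LL) * Real.exp (2 * D / LL) := by
      have : 2 * D / LL + 1 ≤ Real.exp (2 * D / LL) := Real.add_one_le_exp _
      have h5 : 1/2 * LL + D = (1/2 * LL) * (2 * D / LL + 1) := by field_simp; ring
      rw [h5] at hSD
      exact hSD.trans (mul_le_mul_of_nonneg_left this (by linarith))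
    refine (pow_le_pow_left₀ hS0 a1 k).trans ?_
    rw [mul_pow, ← Real.exp_nat_mul]
    refine mul_le_mul_of_nonneg_left (Real.exp_le_exp.2 ?_) (pow_nonneg (by linarith) _)
    rw [← mul_div_assoc, div_le_iff₀ (by linarith)]
    nlinarith
  calc _ ≤ _ := hup
    _ ≤ (2 * Real.log 4 * (N / Real.log N) + N / Real.log N) *
        (((1/2 * LL) ^ k * Real.exp (2 * D * A)) / k.factorial) := by gcongr
    _ = _ := by ring

end PellAux



namespace PellAux
open Finset

lemma lower_count {K c x₀ : ℝ} (hK : 1 < K) (hc : 0 < c) (hx₀ : 1 < x₀)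
    (hch : ∀ x : ℝ, x₀ ≤ x → ∃ Q : Finset ℕ,
      (∀ p ∈ Q, p.Prime ∧ p % 4 = 1 ∧ x / K ≤ p ∧ (p : ℝ) < x) ∧ c * (x / Real.log x) ≤ Q.card)
    (N z y : ℝ) (hN : 1 < N) (hz : 0 < z) (hNz : x₀ ≤ N / z) (hy : y < N / z / K)
    (s : Finset ℕ) (hs : ∀ p ∈ s, p.Prime ∧ p % 4 = 1 ∧ (p : ℝ) ≤ y) (k : ℕ) :
    c * (N / Real.log N) * ∑ T ∈ (powersetCard k s).filter (fun T => ((∏ i ∈ T, i : ℕ) : ℝ) ≤ z),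
      1 / ((∏ i ∈ T, i : ℕ) : ℝ) ≤ (EE (k+1) N).card := by
  choose! Q hQ hQc using hch
  have hlog : 0 < Real.log N := Real.log_pos hN
  set F := (powersetCard k s).filter (fun T => ((∏ i ∈ T, i : ℕ) : ℝ) ≤ z) with hF
  have hF1 : ∀ T ∈ F, T ⊆ s ∧ T.card = k ∧ 1 ≤ ((∏ i ∈ T, i : ℕ) : ℝ) ∧ ((∏ i ∈ T, i : ℕ) : ℝ) ≤ z := by
    intro T hT
    simp only [hF, mem_filter, mem_powersetCard] at hT
    refine ⟨hT.1.1, hT.1.2, ?_, hT.2⟩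
    have : 1 ≤ ∏ i ∈ T, i := prod_pos fun p hp => (hs p (hT.1.1 hp)).1.pos
    exact_mod_cast this
  have hx : ∀ T ∈ F, x₀ ≤ N / ((∏ i ∈ T, i : ℕ) : ℝ) ∧ N / z ≤ N / ((∏ i ∈ T, i : ℕ) : ℝ) := by
    intro T hT
    obtain ⟨_, _, h1, h2⟩ := hF1 T hT
    have : N / z ≤ N / ((∏ i ∈ T, i : ℕ) : ℝ) :=
      div_le_div_of_nonneg_left (by linarith) (by linarith) h2
    exact ⟨hNz.trans this, this⟩
  have hbig : ∀ T ∈ F, ∀ p ∈ Q (N / ((∏ i ∈ T, i : ℕ) : ℝ)), y < p := by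
    intro T hT p hp
    obtain ⟨h1, h2⟩ := hx T hT
    have := (hQ _ h1 p hp).2.2.1
    refine lt_of_lt_of_le hy (le_trans ?_ this)
    exact div_le_div_of_nonneg_right h2 (by linarith)
  have hnot : ∀ T ∈ F, ∀ T' ∈ F, ∀ p ∈ Q (N / ((∏ i ∈ T, i : ℕ) : ℝ)), p ∉ T' := by
    intro T hT T' hT' p hp hpT
    have := (hs p ((hF1 T' hT').1 hpT)).2.2
    linarith [hbig T hT p hp]
  have hcard : (F.sigma fun T => Q (N / ((∏ i ∈ T, i : ℕ) : ℝ))).card ≤ (EE (k+1) N).card := by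
    refine card_le_card_of_injOn (fun x => insert x.2 x.1) ?_ ?_
    · rintro ⟨T, p⟩ hx'
      simp only [coe_sigma, Set.mem_sigma_iff, mem_coe] at hx'
      obtain ⟨hT, hp⟩ := hx'
      obtain ⟨a1, a2, a3, a4⟩ := hF1 T hT
      obtain ⟨b1, b2⟩ := hx T hT
      obtain ⟨q1, q2, q3, q4⟩ := hQ _ b1 p hp
      have hpT := hnot T hT T hT p hp
      simp only [EE, coe_filter, mem_powersetCard, Set.mem_ofPred_eq]
      have hTpos : 0 < ((∏ i ∈ T, i : ℕ) : ℝ) := by linarith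
      have hNc : N ≤ ⌈N⌉₊ := Nat.le_ceil N
      have mem : ∀ q : ℕ, q.Prime → q % 4 = 1 → (q : ℝ) ≤ N → q ∈ P2 ⌈N⌉₊ := by
        intro q h1 h2 h3
        simp only [P2, mem_filter, mem_Ioc]
        exact ⟨⟨h1.pos, by exact_mod_cast h3.trans hNc⟩, h1, Or.inl h2⟩
      have hpN : (p : ℝ) ≤ N := q4.le.trans (div_le_self (by linarith) a3)
      refine ⟨⟨?_, by rw [card_insert_of_notMem hpT, a2]⟩, ?_⟩
      · intro q hq
        rcases mem_insert.1 hq with rfl | hq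
        · exact mem _ q1 q2 hpN
        · obtain ⟨r1, r2, r3⟩ := hs q (a1 hq)
          exact mem _ r1 r2 (by linarith [hbig T hT p hp])
      · rw [prod_insert hpT]
        push_cast at q4 hTpos ⊢
        exact (lt_div_iff₀ hTpos).1 q4
    · rintro ⟨T, p⟩ hx1 ⟨T', p'⟩ hx2 h
      simp only [coe_sigma, Set.mem_sigma_iff, mem_coe] at hx1 hx2 h
      have hpp : p = p' := by
        have : p ∈ insert p' T' := h ▸ mem_insert_self p T
        rcases mem_insert.1 this with h' | h'
        · exact h'
        · exact absurd h' (hnot T hx1.1 T' hx2.1 p hx1.2)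
      subst hpp
      have h1 := hnot T hx1.1 T hx1.1 p hx1.2
      have h2 := hnot T hx1.1 T' hx2.1 p hx1.2
      have : T = T' := by rw [← erase_insert h1, ← erase_insert h2, h]
      subst this
      rfl
  rw [card_sigma] at hcard
  refine le_trans ?_ (show ((∑ T ∈ F, (Q (N / ((∏ i ∈ T, i : ℕ) : ℝ))).card : ℕ) : ℝ) ≤ _ by exact_mod_cast hcard)
  push_cast
  rw [mul_sum]
  refine sum_le_sum fun T hT => ?_
  obtain ⟨a1, a2, a3, a4⟩ := hF1 T hT
  obtain ⟨b1, b2⟩ := hx T hT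
  have := hQc _ b1
  push_cast at this a3 b1 b2 ⊢
  refine le_trans ?_ this
  have hle : Real.log (N / ∏ i ∈ T, (i:ℝ)) ≤ Real.log N :=
    Real.log_le_log (by linarith) (div_le_self (by linarith) a3)
  have hlp : 0 < Real.log (N / ∏ i ∈ T, (i:ℝ)) := Real.log_pos (by linarith)
  have : c * (N / Real.log N) * (1 / ∏ i ∈ T, (i:ℝ)) = c * ((N / ∏ i ∈ T, (i:ℝ)) / Real.log N) := by
    field_simp
  rw [this]
  refine mul_le_mul_of_nonneg_left ?_ hc.le
  exact div_le_div_of_nonneg_left (by linarith) hlp hle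

lemma sum_restrict (s : Finset ℕ) (hs : ∀ p ∈ s, p.Prime) (k : ℕ) (z A B' S P : ℝ) (hz : 1 < z)
    (hS : ∑ p ∈ s, 1 / (p:ℝ) = S) (hS0 : 0 < S) (hP : ∑ p ∈ s, 1 / (p:ℝ) * (1 / (p:ℝ)) ≤ P)
    (hlog : ∑ p ∈ s, 1 / (p:ℝ) * Real.log p ≤ B') (hk : (k:ℝ) ≤ A * S)
    (h1 : P * A ^ 2 ≤ 1/4) (h2 : A * B' ≤ 1/4 * Real.log z) :
    1/2 * (S ^ k / k.factorial) ≤ ∑ T ∈ (powersetCard k s).filter (fun T => ((∏ i ∈ T, i : ℕ) : ℝ) ≤ z),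
      1 / ((∏ i ∈ T, i : ℕ) : ℝ) := by
  set w : ℕ → ℝ := fun p => 1 / (p : ℝ) with hw
  have hw0 : ∀ i, 0 ≤ w i := fun i => by simp only [hw]; positivity
  have hpw : ∀ T : Finset ℕ, ∏ i ∈ T, w i = 1 / ((∏ i ∈ T, i : ℕ) : ℝ) := by
    intro T; simp [hw, prod_inv_distrib]
  have hlz : 0 < Real.log z := Real.log_pos hz
  have hP0 : 0 ≤ P := (sum_nonneg fun i _ => mul_nonneg (hw0 i) (hw0 i)).trans hP
  have hB'0 : 0 ≤ B' := (sum_nonneg fun i _ => mul_nonneg (hw0 i) (Real.log_natCast_nonneg i)).trans hlog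
  have hA0 : 0 ≤ A := by
    by_contra h
    push Not at h
    have : (0:ℝ) ≤ k := by positivity
    nlinarith
  have g1 := es_ge w hw0 s (by rw [hS]; exact hS0) k
  have hSw : ∑ i ∈ s, w i = S := hS
  rw [hSw] at g1
  have g2 : (∑ i ∈ s, w i * w i) * k ^ 2 / S ^ 2 ≤ 1/4 := by
    rw [div_le_iff₀ (by positivity)]
    have : (k:ℝ)^2 ≤ (A * S)^2 := pow_le_pow_left₀ (by positivity) hk 2
    calc (∑ i ∈ s, w i * w i) * (k:ℝ) ^ 2 ≤ P * (A*S)^2 := mul_le_mul hP this (by positivity) hP0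
      _ = (P * A^2) * S^2 := by ring
      _ ≤ _ := mul_le_mul_of_nonneg_right h1 (by positivity)
  have hM : 0 ≤ S ^ k / k.factorial := by positivity
  have g3 : 3/4 * (S ^ k / k.factorial) ≤ es w s k := by
    refine le_trans ?_ g1
    nlinarith
  have g4 : ∑ T ∈ powersetCard k s, (∏ i ∈ T, w i) * ∑ i ∈ T, Real.log i ≤ 1/4 * Real.log z * (S ^ k / k.factorial) := by
    rcases k with _ | j
    · simp; positivity
    · refine (es_weight_le w (fun i => Real.log i) hw0 (fun i => Real.log_natCast_nonneg i) s j).trans ?_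
      have := es_le w hw0 s j
      rw [hSw] at this
      have e : S ^ j / (j.factorial : ℝ) = ((j:ℝ)+1) / S * (S ^ (j+1) / (j+1).factorial) := by
        rw [Nat.factorial_succ]; push_cast; field_simp; ring
      have e2 : S ^ j / (j.factorial : ℝ) ≤ A * (S ^ (j+1) / (j+1).factorial) := by
        rw [e]
        refine mul_le_mul_of_nonneg_right ?_ hM
        rw [div_le_iff₀ hS0]; push_cast at hk; exact hk
      calc _ ≤ (A * (S ^ (j+1) / (j+1).factorial)) * B' :=
            mul_le_mul (this.trans e2) hlog (sum_nonneg fun i _ => mul_nonneg (hw0 i) (Real.log_natCast_nonneg i))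
              (by positivity)
        _ = (A * B') * (S ^ (j+1) / (j+1).factorial) := by ring
        _ ≤ _ := mul_le_mul_of_nonneg_right h2 hM
  have g5 : es w s k ≤ ∑ T ∈ (powersetCard k s).filter (fun T => ((∏ i ∈ T, i : ℕ) : ℝ) ≤ z),
      1 / ((∏ i ∈ T, i : ℕ) : ℝ) + (∑ T ∈ powersetCard k s, (∏ i ∈ T, w i) * ∑ i ∈ T, Real.log i) / Real.log z := by
    rw [sum_filter, sum_div, ← sum_add_distrib, es]
    refine sum_le_sum fun T hT => ?_
    have hTp : ∀ p ∈ T, p.Prime := fun p hp => hs p ((mem_powersetCard.1 hT).1 hp)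
    have hT0 : 0 ≤ ∏ i ∈ T, w i := prod_nonneg fun i _ => hw0 i
    have hl0 : 0 ≤ ∑ i ∈ T, Real.log (i:ℝ) := sum_nonneg fun i _ => Real.log_natCast_nonneg i
    split_ifs with h
    · rw [hpw]
      have : 0 ≤ 1 / ((∏ i ∈ T, i : ℕ) : ℝ) * (∑ i ∈ T, Real.log (i:ℝ)) / Real.log z := by positivity
      linarith
    · rw [zero_add, le_div_iff₀ hlz]
      refine mul_le_mul_of_nonneg_left ?_ hT0
      rw [← Real.log_prod (fun i hi => by have := (hTp i hi).pos; positivity)]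
      push_cast at h
      exact Real.log_le_log (by linarith) (not_le.1 h).le
  have g6 : (∑ T ∈ powersetCard k s, (∏ i ∈ T, w i) * ∑ i ∈ T, Real.log i) / Real.log z ≤ 1/4 * (S ^ k / k.factorial) := by
    rw [div_le_iff₀ hlz]; linarith
  linarith

set_option maxHeartbeats 1000000 in
lemma lower (A : ℝ) (hA : 0 < A) : ∃ C : ℝ, 0 < C ∧ ∀ᶠ N : ℝ in Filter.atTop, ∀ k : ℕ,
    (k : ℝ) + 1 ≤ A * Real.log (Real.log N) →
    C * (N / Real.log N) * ((1 / 2) * Real.log (Real.log N)) ^ k / k.factorial ≤ ((EE (k+1) N).card : ℝ) := by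
  obtain ⟨K, c, x₀, hK, hc, hx₀, hch⟩ := cheb_lower
  obtain ⟨B, hB0, hB⟩ := aa_sum
  obtain ⟨M, hM0, hM⟩ := mertens
  set δ : ℝ := min (1/(64*A)) (1/4) with hδ
  have hδ0 : 0 < δ := lt_min (by positivity) (by norm_num)
  have hδ1 : δ ≤ 1/4 := min_le_right _ _
  have hδ2 : δ ≤ 1/(64*A) := min_le_left _ _
  obtain ⟨y0, hy0⟩ := exists_nat_ge (64 * A^2 + 1)
  have hy0pos : 0 < y0 := by
    have : (0:ℝ) < y0 := lt_of_lt_of_le (by positivity) hy0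
    exact_mod_cast this
  set D := M + y0 + 1/2 * |Real.log (δ/2)| with hD
  have hD0 : 0 ≤ D := by positivity
  have evz : ∀ᶠ N : ℝ in Filter.atTop, K + x₀ ≤ N ^ (1/4 : ℝ) :=
    (tendsto_rpow_atTop (by norm_num)).eventually_ge_atTop _
  have evd : ∀ᶠ N : ℝ in Filter.atTop, (y0:ℝ) + 2 ≤ N ^ (δ/2) :=
    (tendsto_rpow_atTop (by positivity)).eventually_ge_atTop _
  refine ⟨c * (1/2) * Real.exp (-(4 * D * A)), by positivity, ?_⟩
  filter_upwards [evz, evd, ev_loglog (4 * D + 1), ev_log (128 * A * B + 1), Filter.eventually_ge_atTop 2]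
    with N e1 e2 e3 e4 e5 k hk
  set LL := Real.log (Real.log N) with hLL
  set z := N ^ (1/4 : ℝ) with hz
  set u := N ^ (δ/2) with hu
  have hN0 : 0 < N := by linarith
  have hln : 1 ≤ Real.log N := by
    have : 0 ≤ 128 * A * B := by positivity
    linarith
  have hz4 : z ^ 4 = N := by
    rw [hz, ← Real.rpow_natCast, ← Real.rpow_mul hN0.le]; norm_num
  have hz1 : 2 < z := by linarith
  have hlz : Real.log z = 1/4 * Real.log N := by rw [hz, Real.log_rpow hN0]
  have hy0r : (1:ℝ) ≤ y0 := by exact_mod_cast hy0pos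
  have hu2 : u ^ 2 = N ^ δ := by
    rw [hu, ← Real.rpow_natCast, ← Real.rpow_mul hN0.le]; norm_num
  have hdz : N ^ δ ≤ z := Real.rpow_le_rpow_of_exponent_le (by linarith) hδ1
  set Y := ⌊N ^ δ⌋₊ with hY
  have hYle : (Y:ℝ) ≤ N ^ δ := Nat.floor_le (by positivity)
  have hYge : u ≤ Y := by
    have := Nat.lt_floor_add_one (N ^ δ)
    rw [← hY, ← hu2] at this
    nlinarith
  have hY2 : 2 ≤ Y := by
    have : (2:ℝ) ≤ Y := by linarith
    exact_mod_cast this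
  have hyY : y0 ≤ Y := by
    have : (y0:ℝ) ≤ Y := by linarith
    exact_mod_cast this
  set s := (P1 Y).filter (fun p => y0 < p) with hs
  set S := ∑ p ∈ s, 1 / (p:ℝ) with hS
  have hsmem : ∀ p ∈ s, p.Prime ∧ p % 4 = 1 ∧ p ≤ Y ∧ y0 < p := by
    intro p hp
    simp only [hs, P1, mem_filter, mem_Ioc] at hp
    exact ⟨hp.1.2.1, hp.1.2.2, hp.1.1.2, hp.2⟩
  -- lower bound on S
  have hSlow : 1/2 * LL - D ≤ S := by
    have m1 := (abs_le.1 (hM Y hY2)).1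
    have m2 : Real.log (δ/2) + LL ≤ Real.log (Real.log Y) := by
      rw [hLL, ← Real.log_mul (by positivity) (by linarith)]
      refine Real.log_le_log (by positivity) ?_
      rw [← Real.log_rpow hN0]
      exact Real.log_le_log (by positivity) hYge
    have m3 : ∑ p ∈ (P1 Y).filter (fun p => ¬ y0 < p), 1 / (p:ℝ) ≤ y0 := by
      calc _ ≤ ∑ p ∈ Ioc 0 y0, (1:ℝ) := by
            refine (sum_le_sum (g := fun _ => (1:ℝ)) ?_).trans (sum_le_sum_of_subset_of_nonneg ?_ ?_)
            · intro p hp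
              simp only [P1, mem_filter, mem_Ioc] at hp
              have : (1:ℝ) ≤ p := by exact_mod_cast hp.1.1.1
              exact (div_le_one (by linarith)).2 this
            · intro p hp
              simp only [P1, mem_filter, mem_Ioc] at hp ⊢
              omega
            · intros; norm_num
        _ = y0 := by simp
    have m4 := sum_filter_add_sum_filter_not (P1 Y) (fun p => y0 < p) (fun p => 1 / (p:ℝ))
    have m5 := (abs_le.1 (le_refl |Real.log (δ/2)|)).1
    rw [← hs, ← hS] at m4
    linarith
  have hLL1 : 1 ≤ LL := by linarith
  have hS4 : 1/4 * LL ≤ S := by linarith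
  have hS0 : 0 < S := by linarith
  have hP : ∑ p ∈ s, 1 / (p:ℝ) * (1 / (p:ℝ)) ≤ 1 / y0 := by
    have h := sum_Ioc_inv_sq_le_sub (α := ℝ) hy0pos.ne' hyY
    have : ∑ p ∈ s, 1 / (p:ℝ) * (1 / (p:ℝ)) ≤ ∑ i ∈ Ioc y0 Y, ((i:ℝ)^2)⁻¹ := by
      refine (le_of_eq (sum_congr rfl fun p _ => ?_)).trans
        (sum_le_sum_of_subset_of_nonneg (f := fun i : ℕ => ((i:ℝ)^2)⁻¹) ?_ fun _ _ _ => by positivity)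
      · rw [one_div, ← mul_inv, sq]
      · intro p hp
        obtain ⟨_, _, a, b⟩ := hsmem p hp
        exact mem_Ioc.2 ⟨b, a⟩
    have h0 : 0 ≤ (Y:ℝ)⁻¹ := by positivity
    rw [one_div]; linarith
  have hlg : ∑ p ∈ s, 1 / (p:ℝ) * Real.log p ≤ 1/2 * (δ * Real.log N) + B := by
    have h := sum_log_div B hB Y (by omega)
    have h1 : Real.log Y ≤ δ * Real.log N := by
      rw [← Real.log_rpow hN0]
      exact Real.log_le_log (by linarith) hYle
    have h2 : ∑ p ∈ s, 1 / (p:ℝ) * Real.log p ≤ ∑ p ∈ P1 Y, Real.log p / p := by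
      refine (le_of_eq (sum_congr rfl fun p _ => ?_)).trans
        (sum_le_sum_of_subset_of_nonneg (f := fun p : ℕ => Real.log p / p) (filter_subset _ _) fun p _ _ =>
          div_nonneg (Real.log_natCast_nonneg p) (by positivity))
      ring
    linarith
  have hkS : (k:ℝ) ≤ 4 * A * S := by nlinarith
  have r := sum_restrict s (fun p hp => (hsmem p hp).1) k z (4*A) _ S _ (by linarith) rfl hS0 hP hlg hkS
    (by
      rw [one_div_mul_eq_div, div_le_iff₀ (by linarith)]
      nlinarith)
    (by
      rw [hlz]
      have : A * δ ≤ 1/64 := by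
        have := mul_le_mul_of_nonneg_left hδ2 hA.le
        have e : A * (1/(64*A)) = 1/64 := by field_simp
        linarith
      have h2 : A * δ * Real.log N ≤ 1/64 * Real.log N := mul_le_mul_of_nonneg_right this (by linarith)
      nlinarith)
  have hNz : N / z = z ^ 3 := by rw [← hz4]; field_simp
  have lc := lower_count hK hc hx₀ hch N z (N ^ δ) (by linarith) (by linarith)
    (by rw [hNz]; nlinarith [sq_nonneg z, mul_pos (show 0 < z by linarith) (show 0 < z by linarith)])
    (by
      rw [hNz, lt_div_iff₀ (by linarith)]
      have : z * K < z ^ 3 := by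
        have : K < z ^ 2 := by nlinarith
        nlinarith
      exact lt_of_le_of_lt (mul_le_mul_of_nonneg_right hdz (by linarith)) this)
    s (fun p hp => ⟨(hsmem p hp).1, (hsmem p hp).2.1, le_trans (by exact_mod_cast (hsmem p hp).2.2.1) hYle⟩) k
  have c2 : (1/2 * LL) ^ k * Real.exp (-(4 * D * A)) ≤ S ^ k := by
    have a1 : (1/2 * LL) * Real.exp (-(4 * D / LL)) ≤ S := by
      refine le_trans ?_ hSlow
      set x := 2 * D / LL with hx
      have hx0 : 0 ≤ x := by positivity
      have hx1 : x ≤ 1/2 := by rw [hx, div_le_iff₀ (by linarith)]; linarith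
      have : 4 * D / LL = 2 * x := by rw [hx]; ring
      rw [this]
      have e : 1/2 * LL - D = (1/2 * LL) * (1 - x) := by rw [hx]; field_simp
      rw [e]
      refine mul_le_mul_of_nonneg_left ?_ (by linarith)
      rw [Real.exp_neg, inv_le_iff_one_le_mul₀ (Real.exp_pos _)]
      have : 2 * x + 1 ≤ Real.exp (2 * x) := Real.add_one_le_exp _
      nlinarith
    refine le_trans ?_ (pow_le_pow_left₀ (by positivity) a1 k)
    rw [mul_pow (1/2 * LL) (Real.exp _), ← Real.exp_nat_mul]
    refine mul_le_mul_of_nonneg_left (Real.exp_le_exp.2 ?_) (pow_nonneg (by linarith) _)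
    have : (k:ℝ) * (4 * D / LL) ≤ 4 * D * A := by
      rw [← mul_div_assoc, div_le_iff₀ (by linarith)]
      nlinarith
    linarith
  refine le_trans ?_ lc
  have hNl : 0 ≤ c * (N / Real.log N) := by positivity
  refine le_trans ?_ (mul_le_mul_of_nonneg_left r hNl)
  calc _ = c * (N / Real.log N) * (1/2 * (((1/2 * LL) ^ k * Real.exp (-(4 * D * A))) / k.factorial)) := by ring
    _ ≤ _ := by gcongr

end PellAux

/-- Two-sided bounds of Landau type for `|𝒟_r(N)|`, uniformly in `r ≤ A log log N`. -/
theorem count_PellDr_bounds :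
    ∀ A : ℝ, 0 < A → ∃ C₁ C₂ N₀ : ℝ, 0 < C₁ ∧ 0 < C₂ ∧ 0 < N₀ ∧
      ∀ N : ℝ, N₀ ≤ N → ∀ r : ℕ, 1 ≤ r → (r : ℝ) ≤ A * Real.log (Real.log N) →
        C₁ * (N / Real.log N) * ((1 / 2) * Real.log (Real.log N)) ^ (r - 1) /
            (Nat.factorial (r - 1) : ℝ) ≤ ((PellDr r N).ncard : ℝ) ∧
        ((PellDr r N).ncard : ℝ) ≤
          C₂ * (N / Real.log N) * ((1 / 2) * Real.log (Real.log N)) ^ (r - 1) /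
            (Nat.factorial (r - 1) : ℝ) := by
  intro A hA
  obtain ⟨C₁, hC₁, h1⟩ := PellAux.lower A hA
  obtain ⟨C₂, hC₂, h2⟩ := PellAux.upper A
  obtain ⟨N₀, hN₀⟩ := Filter.eventually_atTop.1 (h1.and h2)
  refine ⟨C₁, C₂, max N₀ 1, hC₁, hC₂, by positivity, fun N hN r hr hrA => ?_⟩
  obtain ⟨k, rfl⟩ : ∃ k, r = k + 1 := ⟨r - 1, by omega⟩
  obtain ⟨g1, g2⟩ := hN₀ N ((le_max_left _ _).trans hN)
  rw [PellAux.ncard_eq]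
  push_cast at hrA
  exact ⟨g1 k hrA, g2 k hrA⟩
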